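/- (Strassen's characterization of the Prokhorov distance.) Let n be a positive integer and 1 ≤ p < ∞ a real number, and equip ℝ^n with the ℓ_p norm. Let D and D' be Borel probability measures on ℝ^n and let ε ≥ 0. Then the Lévy–Prokhorov distance satisfies π_p(D, D') ≤ ε if and only if there exists a coupling γ of D and D' — i.e., a Borel probability measure γ on ℝ^n × ℝ^n whose first marginal is D and whose second marginal is D' — such that γ({(x,y) : ‖x − y‖_p > ε}) ≤ ε. -/

import Mathlib

open scoped BigOperators
open MeasureTheory

/-- The ℓ_p norm on `Fin m → ℝ` for a real exponent `p`. -/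
noncomputable def pnorm (p : ℝ) {m : ℕ} (x : Fin m → ℝ) : ℝ :=
  (∑ i, |x i| ^ p) ^ (1 / p)

/-- The open ε-thickening of a set w.r.t. the ℓ_p distance. -/
def thick (p : ℝ) {n : ℕ} (ε : ℝ) (A : Set (Fin n → ℝ)) : Set (Fin n → ℝ) :=
  {x | ∃ y ∈ A, pnorm p (x - y) < ε}

/-- The Lévy–Prokhorov distance between Borel measures on `(ℝ^n, ‖·‖_p)`. -/
noncomputable def prokhorov (p : ℝ) {n : ℕ} (P Q : Measure (Fin n → ℝ)) : ℝ :=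
  sInf {ε : ℝ | 0 < ε ∧ ∀ A : Set (Fin n → ℝ), MeasurableSet A →
    P A ≤ Q (thick p ε A) + ENNReal.ofReal ε ∧
    Q A ≤ P (thick p ε A) + ENNReal.ofReal ε}

/-!
If a coupling `γ` has `γ {d > ε} ≤ ε`, then up to an event of mass `ε` a point of `A` is coupled
to a point of every thickening of `A` by more than `ε`, which bounds the Prokhorov distance.

Conversely, cut the space into finitely many cells of small diameter, up to a set of small mass. The
inequalities `μ A ≤ ν (A^e) + e` for unions `A` of cells are Hall's condition with deficiency `e`
for the cell masses, joining cells at distance less than `e`, so Hall's theorem, after rounding the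
masses to multiples of `1 / N`, matches all but mass slightly more than `e` of `μ` with nearby mass
of `ν`. Spreading the matched mass as products of conditioned measures and coupling the remainders
independently gives couplings with `γ {d > s} ≤ s` for every `s` larger than the distance. Couplings
of two probability measures on Polish spaces form a compact set, on which these closed conditions
are nested, so some coupling satisfies all of them.
-/

open ProbabilityTheory TopologicalSpace
open scoped NNReal ENNReal

section Transport

variable {ι κ : Type*} [Fintype ι] [Fintype κ]

theorem exists_nat_transport {a : ι → ℕ} {b : κ → ℕ} {R : ι → κ → Prop}
    (hall : ∀ (S : Finset ι) (T : Finset κ), (∀ i ∈ S, ∀ j, R i j → j ∈ T) →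
      ∑ i ∈ S, a i ≤ ∑ j ∈ T, b j) :
    ∃ π : ι → κ → ℕ, (∀ i, ∑ j, π i j = a i) ∧ (∀ j, ∑ i, π i j ≤ b j) ∧
      ∀ i j, π i j ≠ 0 → R i j := by
  classical
  -- Hall's theorem for `a i` copies of each `i` and `b j` copies of each `j`.
  have hall_copies (X : Finset (Σ i, Fin (a i))) :
      X.card ≤ (Finset.univ.filter fun y : Σ j, Fin (b j) ↦ ∃ x ∈ X, R x.1 y.1).card := by
    let T := Finset.univ.filter fun j ↦ ∃ x ∈ X, R x.1 j
    calc X.card ≤ ((X.image Sigma.fst).sigma fun _ ↦ Finset.univ).card :=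
          Finset.card_le_card fun x hx ↦
            Finset.mem_sigma.2 ⟨Finset.mem_image_of_mem _ hx, Finset.mem_univ _⟩
      _ = ∑ i ∈ X.image Sigma.fst, a i := by simp
      _ ≤ ∑ j ∈ T, b j := hall _ _ (by simpa [T] using fun i k hk j hR ↦ ⟨i, ⟨k, hk⟩, hR⟩)
      _ = (T.sigma fun _ ↦ Finset.univ).card := by simp
      _ ≤ _ := Finset.card_le_card fun y hy ↦ by simpa [T] using hy
  obtain ⟨f, f_inj, hf⟩ :=
    (Fintype.all_card_le_filter_rel_iff_exists_injective _).1 hall_copies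
  refine ⟨fun i j ↦ (Finset.univ.filter fun k ↦ (f ⟨i, k⟩).1 = j).card, fun i ↦ ?_, fun j ↦ ?_,
    fun i j hπ ↦ ?_⟩
  · simpa using (Finset.card_eq_sum_card_fiberwise (s := Finset.univ) (t := Finset.univ)
      (f := fun k ↦ (f ⟨i, k⟩).1) (fun _ _ ↦ by simp)).symm
  · calc ∑ i, (Finset.univ.filter fun k ↦ (f ⟨i, k⟩).1 = j).card
        = (Finset.univ.sigma fun i ↦ Finset.univ.filter fun k ↦ (f ⟨i, k⟩).1 = j).card :=
          (Finset.card_sigma _ _).symm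
      _ ≤ (({j} : Finset κ).sigma fun j ↦ (Finset.univ : Finset (Fin (b j)))).card :=
          Finset.card_le_card_of_injOn f (fun x hx ↦ by simpa using hx) f_inj.injOn
      _ = b j := by simp
  · obtain ⟨k, hk⟩ := Finset.card_ne_zero.1 hπ
    exact (Finset.mem_filter.1 hk).2 ▸ hf ⟨i, k⟩

theorem exists_nat_transport_of_deficiency {a : ι → ℕ} {b : κ → ℕ} {R : ι → κ → Prop} {t : ℕ}
    (hall : ∀ (S : Finset ι) (T : Finset κ), (∀ i ∈ S, ∀ j, R i j → j ∈ T) →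
      ∑ i ∈ S, a i ≤ ∑ j ∈ T, b j + t) :
    ∃ π : ι → κ → ℕ, (∀ i, ∑ j, π i j ≤ a i) ∧ (∀ j, ∑ i, π i j ≤ b j) ∧
      (∀ i j, π i j ≠ 0 → R i j) ∧ ∑ i, a i ≤ ∑ i, ∑ j, π i j + t := by
  classical
  -- An extra sink `none` of capacity `t`, joined to every source, absorbs the deficiency.
  obtain ⟨π, hsource, hsink, hR⟩ := exists_nat_transport (a := a)
    (b := fun o : Option κ ↦ o.elim t b) (R := fun i (o : Option κ) ↦ ∀ j ∈ o, R i j)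
    fun S T hST ↦ by
      obtain rfl | ⟨i, hi⟩ := S.eq_empty_or_nonempty
      · simp
      have hnone : none ∈ T := hST i hi none (by simp)
      rw [← Finset.insert_eq_of_mem hnone, ← Finset.insertNone_eraseNone, Finset.sum_insertNone,
        add_comm]
      exact hall S _ fun i hi j hij ↦ Finset.mem_eraseNone.2 (hST i hi j (by simpa using hij))
  refine ⟨fun i j ↦ π i (some j), fun i ↦ ?_, fun j ↦ hsink (some j),
    fun i j hij ↦ hR i (some j) hij j rfl, ?_⟩
  · rw [← hsource i, Fintype.sum_option]
    exact Nat.le_add_left _ _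
  · calc ∑ i, a i = ∑ i, π i none + ∑ i, ∑ j, π i (some j) := by
          simp only [← hsource, Fintype.sum_option, Finset.sum_add_distrib]
      _ ≤ t + ∑ i, ∑ j, π i (some j) := by gcongr; exact hsink none
      _ = _ := add_comm _ _

theorem sum_le_sum_floor_add_card {α : Type*} (s : Finset α) (f : α → ℝ≥0) :
    ∑ x ∈ s, f x ≤ ∑ x ∈ s, (⌊f x⌋₊ : ℝ≥0) + s.card := by
  calc ∑ x ∈ s, f x ≤ ∑ x ∈ s, ((⌊f x⌋₊ : ℝ≥0) + 1) :=
        Finset.sum_le_sum fun x _ ↦ (Nat.lt_floor_add_one _).le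
    _ = ∑ x ∈ s, (⌊f x⌋₊ : ℝ≥0) + s.card := by simp [Finset.sum_add_distrib]

theorem sum_floor_le_sum_floor_add {α β : Type*} {S : Finset α} {T : Finset β} {f : α → ℝ≥0}
    {g : β → ℝ≥0} {t : ℝ≥0} (h : ∑ x ∈ S, f x ≤ ∑ y ∈ T, g y + t) :
    ∑ x ∈ S, ⌊f x⌋₊ ≤ ∑ y ∈ T, ⌊g y⌋₊ + (⌊t⌋₊ + 1 + T.card) := by
  rw [← Nat.cast_le (α := ℝ≥0)]
  push_cast
  calc ∑ x ∈ S, (⌊f x⌋₊ : ℝ≥0) ≤ ∑ x ∈ S, f x := by gcongr; exact Nat.floor_le zero_le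
    _ ≤ ∑ y ∈ T, g y + t := h
    _ ≤ (∑ y ∈ T, (⌊g y⌋₊ : ℝ≥0) + T.card) + (⌊t⌋₊ + 1) :=
        add_le_add (sum_le_sum_floor_add_card T g) (Nat.lt_floor_add_one t).le
    _ = _ := by ring

theorem exists_nnreal_transport_of_deficiency {a : ι → ℝ≥0} {b : κ → ℝ≥0} {R : ι → κ → Prop}
    {t η : ℝ≥0} (hη : 0 < η)
    (hall : ∀ (S : Finset ι) (T : Finset κ), (∀ i ∈ S, ∀ j, R i j → j ∈ T) →
      ∑ i ∈ S, a i ≤ ∑ j ∈ T, b j + t) :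
    ∃ π : ι → κ → ℝ≥0, (∀ i, ∑ j, π i j ≤ a i) ∧ (∀ j, ∑ i, π i j ≤ b j) ∧
      (∀ i j, π i j ≠ 0 → R i j) ∧ ∑ i, a i ≤ ∑ i, ∑ j, π i j + t + η := by
  obtain ⟨N, hN⟩ := exists_nat_gt ((1 + Fintype.card κ + Fintype.card ι) / η)
  have hN_pos : (0 : ℝ≥0) < N := hN.bot_lt
  rw [div_lt_iff₀ hη] at hN
  obtain ⟨π, hsource, hsink, hR, htotal⟩ := exists_nat_transport_of_deficiency
    (a := fun i ↦ ⌊N * a i⌋₊) (b := fun j ↦ ⌊N * b j⌋₊) (R := R)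
    (t := ⌊N * t⌋₊ + 1 + Fintype.card κ) fun S T hST ↦ by
      have hscaled : ∑ i ∈ S, N * a i ≤ ∑ j ∈ T, N * b j + N * t := by
        rw [← Finset.mul_sum, ← Finset.mul_sum, ← mul_add]
        gcongr
        exact hall S T hST
      refine (sum_floor_le_sum_floor_add hscaled).trans ?_
      gcongr
      exact Finset.card_le_univ T
  refine ⟨fun i j ↦ π i j / N, fun i ↦ ?_, fun j ↦ ?_,
    fun i j hij ↦ hR i j fun h ↦ hij (by simp [h]), ?_⟩
  · rw [← Finset.sum_div, div_le_iff₀' hN_pos]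
    exact_mod_cast (Nat.le_floor_iff zero_le).1 (hsource i)
  · rw [← Finset.sum_div, div_le_iff₀' hN_pos]
    exact_mod_cast (Nat.le_floor_iff zero_le).1 (hsink j)
  · refine le_of_mul_le_mul_left ?_ hN_pos
    calc N * ∑ i, a i ≤ ∑ i, (⌊N * a i⌋₊ : ℝ≥0) + Fintype.card ι := by
          rw [Finset.mul_sum]
          exact sum_le_sum_floor_add_card _ _
      _ ≤ (∑ i, ∑ j, (π i j : ℝ≥0) + (⌊N * t⌋₊ + 1 + Fintype.card κ)) + Fintype.card ι := by
          gcongr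
          exact_mod_cast htotal
      _ = ∑ i, ∑ j, (π i j : ℝ≥0) + ⌊N * t⌋₊ + (1 + Fintype.card κ + Fintype.card ι) := by ring
      _ ≤ ∑ i, ∑ j, (π i j : ℝ≥0) + N * t + N * η := by
          gcongr
          exact Nat.floor_le zero_le
      _ = N * (∑ i, ∑ j, (π i j : ℝ≥0) / N + t + η) := by
          simp only [← Finset.sum_div, mul_add, mul_div_cancel₀ _ hN_pos.ne']

end Transport


section Coupling

variable {E F : Type*} [MeasurableSpace E] [MeasurableSpace F]

/-- `γ` is a coupling of `μ` and `ν`, i.e. a measure on the product with these marginals; the total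
mass is not required to be one. -/
structure IsCoupling (γ : Measure (E × F)) (μ : Measure E) (ν : Measure F) : Prop where
  map_fst : γ.map Prod.fst = μ
  map_snd : γ.map Prod.snd = ν

namespace IsCoupling

variable {γ γ' : Measure (E × F)} {μ μ' : Measure E} {ν ν' : Measure F}

theorem isProbabilityMeasure (h : IsCoupling γ μ ν) [IsProbabilityMeasure μ] :
    IsProbabilityMeasure γ :=
  have : IsProbabilityMeasure (γ.map Prod.fst) := h.map_fst ▸ inferInstance
  Measure.isProbabilityMeasure_of_map Prod.fst

theorem swap (h : IsCoupling γ μ ν) : IsCoupling (γ.map Prod.swap) ν μ where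
  map_fst := by
    rw [Measure.map_map measurable_fst measurable_swap, ← h.map_snd]; rfl
  map_snd := by
    rw [Measure.map_map measurable_snd measurable_swap, ← h.map_fst]; rfl

theorem add (h : IsCoupling γ μ ν) (h' : IsCoupling γ' μ' ν') :
    IsCoupling (γ + γ') (μ + μ') (ν + ν') where
  map_fst := by rw [Measure.map_add _ _ measurable_fst, h.map_fst, h'.map_fst]
  map_snd := by rw [Measure.map_add _ _ measurable_snd, h.map_snd, h'.map_snd]

theorem measure_univ_fst (h : IsCoupling γ μ ν) : μ Set.univ = γ Set.univ := by
  rw [← h.map_fst, Measure.map_apply measurable_fst .univ, Set.preimage_univ]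

theorem measure_univ_snd (h : IsCoupling γ μ ν) : ν Set.univ = γ Set.univ :=
  h.swap.measure_univ_fst.trans (by rw [Measure.map_apply measurable_swap .univ, Set.preimage_univ])

end IsCoupling

variable {μ : Measure E} {ν : Measure F} [IsFiniteMeasure μ] [IsFiniteMeasure ν]

theorem isCoupling_inv_smul_prod (h : μ Set.univ = ν Set.univ) :
    IsCoupling ((μ Set.univ)⁻¹ • μ.prod ν) μ ν := by
  obtain hμ | hμ := eq_or_ne (μ Set.univ) 0
  · have hν := h ▸ hμ
    rw [Measure.measure_univ_eq_zero] at hμ hν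
    subst hμ hν
    constructor <;> simp
  · have hcancel := ENNReal.inv_mul_cancel hμ (measure_ne_top μ _)
    constructor
    · rw [Measure.map_smul, Measure.map_fst_prod, smul_smul, ← h, hcancel, one_smul]
    · rw [Measure.map_smul, Measure.map_snd_prod, smul_smul, hcancel, one_smul]

theorem IsCoupling.exists_ge {γ₀ : Measure (E × F)} {μ₀ : Measure E} {ν₀ : Measure F}
    (h₀ : IsCoupling γ₀ μ₀ ν₀) (hμ : μ₀ ≤ μ) (hν : ν₀ ≤ ν) (h : μ Set.univ = ν Set.univ) :
    ∃ γ, IsCoupling γ μ ν ∧ γ₀ ≤ γ := by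
  have := isFiniteMeasure_of_le μ hμ
  have := isFiniteMeasure_of_le ν hν
  have hrest : IsCoupling _ (μ - μ₀) (ν - ν₀) := isCoupling_inv_smul_prod <| by
    rw [Measure.sub_apply .univ hμ, Measure.sub_apply .univ hν, h, h₀.measure_univ_fst,
      h₀.measure_univ_snd]
  have hsum := hrest.add h₀
  rw [Measure.sub_add_cancel_of_le hμ, Measure.sub_add_cancel_of_le hν] at hsum
  exact ⟨_, hsum, Measure.le_add_left le_rfl⟩

end Coupling

section Cells

variable {E F ι κ : Type*} [MeasurableSpace E] [MeasurableSpace F] [Fintype ι] [Fintype κ]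
  {A : ι → Set E} {B : κ → Set F} {π : ι → κ → ℝ≥0}

theorem sum_smul_cond_le {μ : Measure E} {w : ι → ℝ≥0} (hA : ∀ i, MeasurableSet (A i))
    (hA_disj : Pairwise (Function.onFun Disjoint A)) (hw : ∀ i, w i ≤ μ (A i)) :
    ∑ i, w i • μ[|A i] ≤ μ := by
  have hcell (i : ι) : w i • μ[|A i] ≤ μ.restrict (A i) := Measure.le_intro fun s _ _ ↦
    calc (w i • μ[|A i]) s = (w i * (μ (A i))⁻¹) * μ.restrict (A i) s := by
          rw [ProbabilityTheory.cond, Measure.smul_apply, Measure.smul_apply, ENNReal.smul_def,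
            smul_eq_mul, smul_eq_mul, mul_assoc]
      _ ≤ 1 * μ.restrict (A i) s := by
          gcongr
          exact (mul_le_mul_left (hw i) _).trans (ENNReal.mul_inv_le_one _)
      _ = μ.restrict (A i) s := one_mul _
  calc ∑ i, w i • μ[|A i] ≤ ∑ i, μ.restrict (A i) := Finset.sum_le_sum fun i _ ↦ hcell i
    _ = μ.restrict (⋃ i, A i) := by
        rw [Measure.restrict_iUnion hA_disj hA, Measure.sum_fintype]
    _ ≤ μ := Measure.restrict_le_self

/-- The measure that spreads mass `π i j` over `A i ×ˢ B j` by drawing the two coordinates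
independently from `μ` conditioned on `A i` and `ν` conditioned on `B j`. -/
noncomputable def blockMeasure (μ : Measure E) (ν : Measure F) (A : ι → Set E) (B : κ → Set F)
    (π : ι → κ → ℝ≥0) : Measure (E × F) :=
  ∑ i, ∑ j, π i j • (μ[|A i]).prod (ν[|B j])

variable {μ : Measure E} {ν : Measure F}

theorem map_fst_blockMeasure_le (hA : ∀ i, MeasurableSet (A i))
    (hA_disj : Pairwise (Function.onFun Disjoint A)) (hπ : ∀ i, (∑ j, π i j : ℝ≥0) ≤ μ (A i)) :
    (blockMeasure μ ν A B π).map Prod.fst ≤ μ := by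
  have hterm (i : ι) (j : κ) :
      (π i j • (μ[|A i]).prod (ν[|B j])).map Prod.fst ≤ π i j • μ[|A i] := by
    rw [Measure.map_smul, Measure.map_fst_prod]
    refine Measure.le_intro fun s _ _ ↦ ?_
    simp only [Measure.smul_apply, smul_eq_mul]
    gcongr
    exact mul_le_of_le_one_left' prob_le_one
  calc (blockMeasure μ ν A B π).map Prod.fst
      = ∑ i, ∑ j, (π i j • (μ[|A i]).prod (ν[|B j])).map Prod.fst := by
        simp only [blockMeasure, Measure.map_finset_sum measurable_fst.aemeasurable]
    _ ≤ ∑ i, ∑ j, π i j • μ[|A i] := by gcongr; exact hterm _ _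
    _ = ∑ i, (∑ j, π i j) • μ[|A i] := by simp only [Finset.sum_smul]
    _ ≤ μ := sum_smul_cond_le hA hA_disj hπ

theorem map_swap_blockMeasure (μ : Measure E) (ν : Measure F) (A : ι → Set E) (B : κ → Set F)
    (π : ι → κ → ℝ≥0) :
    (blockMeasure μ ν A B π).map Prod.swap = blockMeasure ν μ B A fun j i ↦ π i j := by
  simp only [blockMeasure, Measure.map_finset_sum measurable_swap.aemeasurable, Measure.map_smul,
    Measure.prod_swap]
  exact Finset.sum_comm

theorem map_snd_blockMeasure_le (hB : ∀ j, MeasurableSet (B j))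
    (hB_disj : Pairwise (Function.onFun Disjoint B)) (hπ : ∀ j, (∑ i, π i j : ℝ≥0) ≤ ν (B j)) :
    (blockMeasure μ ν A B π).map Prod.snd ≤ ν := by
  have hswap := map_fst_blockMeasure_le (ν := μ) (B := A) hB hB_disj hπ
  rwa [← map_swap_blockMeasure, Measure.map_map measurable_fst measurable_swap] at hswap

variable [IsFiniteMeasure μ] [IsFiniteMeasure ν]

theorem sum_le_blockMeasure {G : Set (E × F)} (hrow : ∀ i, (∑ j, π i j : ℝ≥0) ≤ μ (A i))
    (hcol : ∀ j, (∑ i, π i j : ℝ≥0) ≤ ν (B j)) (hG : ∀ i j, π i j ≠ 0 → A i ×ˢ B j ⊆ G) :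
    (∑ i, ∑ j, π i j : ℝ≥0) ≤ blockMeasure μ ν A B π G := by
  simp only [blockMeasure, Measure.finsetSum_apply, ENNReal.ofNNReal_finsetSum]
  gcongr with i _ j _
  obtain hπ | hπ := eq_or_ne (π i j) 0
  · simp [hπ]
  have hπ_pos : (0 : ℝ≥0∞) < π i j := ENNReal.coe_pos.2 hπ.bot_lt
  have hμ : μ (A i) ≠ 0 := (hπ_pos.trans_le <| (ENNReal.coe_le_coe.2 <|
    Finset.single_le_sum (fun _ _ ↦ zero_le) (Finset.mem_univ j)).trans (hrow i)).ne'
  have hν : ν (B j) ≠ 0 := (hπ_pos.trans_le <| (ENNReal.coe_le_coe.2 <|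
    Finset.single_le_sum (f := (π · j)) (fun _ _ ↦ zero_le) (Finset.mem_univ i)).trans
      (hcol j)).ne'
  calc (π i j : ℝ≥0∞) = π i j * (μ[|A i]).prod (ν[|B j]) (A i ×ˢ B j) := by
        rw [Measure.prod_prod, cond_apply_self hμ (measure_ne_top μ _),
          cond_apply_self hν (measure_ne_top ν _), mul_one, mul_one]
    _ ≤ π i j * (μ[|A i]).prod (ν[|B j]) G := by gcongr; exact hG i j hπ

end Cells

theorem exists_isCoupling_of_cells {E F ι κ : Type*} [MeasurableSpace E] [MeasurableSpace F]
    [Finite ι] [Finite κ] {μ : Measure E} {ν : Measure F} [IsFiniteMeasure μ] [IsFiniteMeasure ν]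
    {A : ι → Set E} {B : κ → Set F} {R : ι → κ → Prop} {t η : ℝ≥0} (hη : 0 < η)
    (h : μ Set.univ = ν Set.univ)
    (hA : ∀ i, MeasurableSet (A i)) (hA_disj : Pairwise (Function.onFun Disjoint A))
    (hB : ∀ j, MeasurableSet (B j)) (hB_disj : Pairwise (Function.onFun Disjoint B))
    (hall : ∀ (S : Finset ι) (T : Finset κ), (∀ i ∈ S, ∀ j, R i j → j ∈ T) →
      μ (⋃ i ∈ S, A i) ≤ ν (⋃ j ∈ T, B j) + t) :
    ∃ γ, IsCoupling γ μ ν ∧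
      μ (⋃ i, A i) ≤ γ (⋃ (i) (j) (_ : R i j), A i ×ˢ B j) + t + η := by
  have := Fintype.ofFinite ι
  have := Fintype.ofFinite κ
  have hμ_sum (S : Finset ι) :
      μ (⋃ i ∈ S, A i) = (∑ i ∈ S, (μ (A i)).toNNReal : ℝ≥0) := by
    rw [measure_biUnion_finset (fun i _ j _ hij ↦ hA_disj hij) fun i _ ↦ hA i]
    simp [ENNReal.coe_toNNReal, measure_ne_top]
  have hν_sum (T : Finset κ) :
      ν (⋃ j ∈ T, B j) = (∑ j ∈ T, (ν (B j)).toNNReal : ℝ≥0) := by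
    rw [measure_biUnion_finset (fun i _ j _ hij ↦ hB_disj hij) fun j _ ↦ hB j]
    simp [ENNReal.coe_toNNReal, measure_ne_top]
  obtain ⟨π, hrow, hcol, hR, htotal⟩ := exists_nnreal_transport_of_deficiency
    (a := fun i ↦ (μ (A i)).toNNReal) (b := fun j ↦ (ν (B j)).toNNReal) hη fun S T hST ↦ by
      simpa only [hμ_sum, hν_sum, ← ENNReal.coe_add, ENNReal.coe_le_coe] using hall S T hST
  have hrow_le (i : ι) : (∑ j, π i j : ℝ≥0) ≤ μ (A i) :=
    (ENNReal.coe_le_coe.2 (hrow i)).trans ENNReal.coe_toNNReal_le_self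
  have hcol_le (j : κ) : (∑ i, π i j : ℝ≥0) ≤ ν (B j) :=
    (ENNReal.coe_le_coe.2 (hcol j)).trans ENNReal.coe_toNNReal_le_self
  have hfst := map_fst_blockMeasure_le (ν := ν) (B := B) hA hA_disj hrow_le
  have hsnd := map_snd_blockMeasure_le (μ := μ) (A := A) hB hB_disj hcol_le
  obtain ⟨γ, hγ, hle⟩ := IsCoupling.exists_ge ⟨rfl, rfl⟩ hfst hsnd h
  refine ⟨γ, hγ, ?_⟩
  calc μ (⋃ i, A i) = (∑ i, (μ (A i)).toNNReal : ℝ≥0) := by simpa using hμ_sum Finset.univ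
    _ ≤ (∑ i, ∑ j, π i j : ℝ≥0) + t + η := mod_cast htotal
    _ ≤ _ := by
        gcongr
        exact (sum_le_blockMeasure hrow_le hcol_le fun i j hπ q hq ↦
          Set.mem_iUnion₂.2 ⟨i, j, Set.mem_iUnion.2 ⟨hR i j hπ, hq⟩⟩).trans (hle _)

section Prokhorov

variable {E : Type*}

/-- The open `ε`-thickening of `A` for the distance function `d`. -/
def openThickening (d : E → E → ℝ) (ε : ℝ) (A : Set E) : Set E :=
  {x | ∃ y ∈ A, d x y < ε}

theorem openThickening_mono {d : E → E → ℝ} {ε δ : ℝ} (h : ε ≤ δ) (A : Set E) :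
    openThickening d ε A ⊆ openThickening d δ A :=
  fun _ ⟨y, hy, hxy⟩ ↦ ⟨y, hy, hxy.trans_le h⟩

theorem openThickening_biUnion_subset {d : E → E → ℝ} {ε : ℝ} {ι : Type*} {A : ι → Set E}
    {S T : Finset ι} (h : ∀ i ∈ S, ∀ j, (∃ x ∈ A i, ∃ y ∈ A j, d y x < ε) → j ∈ T) :
    openThickening d ε (⋃ i ∈ S, A i) ⊆ (⋃ j ∈ T, A j) ∪ (⋃ i, A i)ᶜ := by
  rintro y ⟨x, hx, hyx⟩
  obtain ⟨i, hi, hxi⟩ := Set.mem_iUnion₂.1 hx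
  refine or_iff_not_imp_right.2 fun hy ↦ ?_
  obtain ⟨j, hyj⟩ := Set.mem_iUnion.1 (not_not.1 hy)
  exact Set.mem_iUnion₂.2 ⟨j, h i hi j ⟨x, hxi, y, hyj, hyx⟩, hyj⟩

variable [MeasurableSpace E]

/-- The Lévy–Prokhorov distance for the distance function `d`, which need not induce a given
topology; the thickenings are not assumed measurable. -/
noncomputable def prokhorovDist (d : E → E → ℝ) (μ ν : Measure E) : ℝ :=
  sInf {ε : ℝ | 0 < ε ∧ ∀ A : Set E, MeasurableSet A →
    μ A ≤ ν (openThickening d ε A) + ENNReal.ofReal ε ∧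
    ν A ≤ μ (openThickening d ε A) + ENNReal.ofReal ε}

variable {μ ν : Measure E}

theorem measure_le_of_prokhorovDist_lt [IsProbabilityMeasure μ] [IsProbabilityMeasure ν]
    {d : E → E → ℝ} {s : ℝ} (h : prokhorovDist d μ ν < s) {A : Set E} (hA : MeasurableSet A) :
    μ A ≤ ν (openThickening d s A) + ENNReal.ofReal s := by
  obtain ⟨e, ⟨-, he⟩, hes⟩ := exists_lt_of_csInf_lt (by
    refine ⟨1, one_pos, fun _ _ ↦ ?_⟩
    rw [ENNReal.ofReal_one]
    exact ⟨prob_le_one.trans le_add_self, prob_le_one.trans le_add_self⟩) h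
  calc μ A ≤ ν (openThickening d e A) + ENNReal.ofReal e := (he A hA).1
    _ ≤ _ := by gcongr; exact openThickening_mono hes.le A

theorem IsCoupling.measure_le {γ : Measure (E × E)} (hγ : IsCoupling γ μ ν) {d : E → E → ℝ}
    (hd : ∀ x y, d x y = d y x) {ε s : ℝ} (hs : ε < s) {A : Set E} (hA : MeasurableSet A) :
    μ A ≤ ν (openThickening d s A) + γ {q | ε < d q.1 q.2} := by
  have hcover : Prod.fst ⁻¹' A ⊆ Prod.snd ⁻¹' openThickening d s A ∪ {q | ε < d q.1 q.2} :=
    fun q hq ↦ or_iff_not_imp_right.2 fun hbad ↦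
      ⟨q.1, hq, (hd _ _).trans_lt ((not_lt.1 hbad).trans_lt hs)⟩
  calc μ A = γ (Prod.fst ⁻¹' A) := by rw [← hγ.map_fst, Measure.map_apply measurable_fst hA]
    _ ≤ γ (Prod.snd ⁻¹' openThickening d s A) + γ {q | ε < d q.1 q.2} :=
        (measure_mono hcover).trans (measure_union_le _ _)
    _ ≤ ν (openThickening d s A) + γ {q | ε < d q.1 q.2} := by
        gcongr
        exact hγ.map_snd ▸ Measure.le_map_apply measurable_snd.aemeasurable _

theorem IsCoupling.prokhorovDist_le {γ : Measure (E × E)} (hγ : IsCoupling γ μ ν)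
    {d : E → E → ℝ} (hd : ∀ x y, d x y = d y x) {ε : ℝ} (hε : 0 ≤ ε)
    (h : γ {q | ε < d q.1 q.2} ≤ ENNReal.ofReal ε) : prokhorovDist d μ ν ≤ ε := by
  have hswap : γ.map Prod.swap {q | ε < d q.1 q.2} = γ {q | ε < d q.1 q.2} := by
    refine (MeasurableEquiv.prodComm.map_apply _).trans (congrArg γ (Set.ext fun q ↦ ?_))
    exact iff_of_eq (congrArg (ε < ·) (hd _ _))
  refine le_of_forall_gt_imp_ge_of_dense fun s hs ↦
    csInf_le ⟨0, fun _ he ↦ he.1.le⟩ ⟨hε.trans_lt hs, fun A hA ↦ ?_⟩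
  have hle : γ {q | ε < d q.1 q.2} ≤ ENNReal.ofReal s :=
    h.trans (ENNReal.ofReal_le_ofReal hs.le)
  exact ⟨(hγ.measure_le hd hs hA).trans (by gcongr),
    (hγ.swap.measure_le hd hs hA).trans (by rw [hswap]; gcongr)⟩

end Prokhorov

section Approximation

theorem exists_isCoupling_of_small_cells {E ι : Type*} [MeasurableSpace E] [Finite ι]
    {d : PseudoMetric E ℝ} {μ ν : Measure E} [IsProbabilityMeasure μ] [IsProbabilityMeasure ν]
    {A : ι → Set E} {e r : ℝ} {η : ℝ≥0} (hη : 0 < η) (hA : ∀ i, MeasurableSet (A i))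
    (hA_disj : Pairwise (Function.onFun Disjoint A))
    (hA_small : ∀ i, ∀ x ∈ A i, ∀ y ∈ A i, d x y < r)
    (hμ : μ (⋃ i, A i)ᶜ ≤ η) (hν : ν (⋃ i, A i)ᶜ ≤ η)
    (h : ∀ A, MeasurableSet A → μ A ≤ ν (openThickening d e A) + ENNReal.ofReal e) :
    ∃ γ, IsCoupling γ μ ν ∧
      γ {q | e + 2 * r < d q.1 q.2} ≤ ENNReal.ofReal e + 3 * η := by
  let R (i j : ι) : Prop := ∃ x ∈ A i, ∃ y ∈ A j, d y x < e
  have hall (S T : Finset ι) (hST : ∀ i ∈ S, ∀ j, R i j → j ∈ T) :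
      μ (⋃ i ∈ S, A i) ≤ ν (⋃ j ∈ T, A j) + (e.toNNReal + η : ℝ≥0) := by
    calc μ (⋃ i ∈ S, A i) ≤ ν (openThickening d e (⋃ i ∈ S, A i)) + ENNReal.ofReal e :=
          h _ (S.measurableSet_biUnion fun i _ ↦ hA i)
      _ ≤ (ν (⋃ j ∈ T, A j) + η) + ENNReal.ofReal e := by
          gcongr
          exact (measure_mono (openThickening_biUnion_subset hST)).trans
            ((measure_union_le _ _).trans (by gcongr))
      _ = _ := by rw [add_assoc, add_comm (η : ℝ≥0∞), ENNReal.coe_add, ENNReal.ofReal]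
  obtain ⟨γ, hγ, hmass⟩ := exists_isCoupling_of_cells hη
    (measure_univ.trans measure_univ.symm) hA hA_disj hA hA_disj hall
  have := hγ.isProbabilityMeasure
  refine ⟨γ, hγ, ?_⟩
  set G := ⋃ (i) (j) (_ : R i j), A i ×ˢ A j
  have hG_meas : MeasurableSet G :=
    .iUnion fun i ↦ .iUnion fun j ↦ .iUnion fun _ ↦ (hA i).prod (hA j)
  have hG_near : Disjoint {q | e + 2 * r < d q.1 q.2} G := Set.disjoint_left.2 fun q hq hqG ↦ by
    simp only [G, Set.mem_iUnion] at hqG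
    obtain ⟨i, j, ⟨x, hx, y, hy, hyx⟩, hqi, hqj⟩ := hqG
    have hq_far : e + 2 * r < d q.1 q.2 := hq
    linarith [d.triangle q.1 x q.2, d.triangle x y q.2, d.symm x y, hA_small i _ hqi _ hx,
      hA_small j _ hy _ hqj]
  refine ENNReal.le_of_add_le_add_left (measure_ne_top γ G) ?_
  calc γ G + γ {q | e + 2 * r < d q.1 q.2} ≤ 1 := by
        rw [add_comm, ← measure_union hG_near hG_meas]; exact prob_le_one
    _ ≤ μ (⋃ i, A i) + μ (⋃ i, A i)ᶜ := by
        rw [measure_add_measure_compl (.iUnion hA), measure_univ]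
    _ ≤ (γ G + (e.toNNReal + η : ℝ≥0) + η) + η := by gcongr
    _ = γ G + (ENNReal.ofReal e + 3 * η) := by
        rw [ENNReal.coe_add, ENNReal.ofReal]; ring

variable {E : Type*} [TopologicalSpace E] [SeparableSpace E] [MeasurableSpace E]
  [OpensMeasurableSpace E] {d : PseudoMetric E ℝ}

theorem exists_seq_small_cells [Nonempty E] (hd : Continuous fun q : E × E ↦ d q.1 q.2) {r : ℝ}
    (hr : 0 < r) :
    ∃ C : ℕ → Set E, (∀ i, MeasurableSet (C i)) ∧ Pairwise (Function.onFun Disjoint C) ∧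
      ⋃ i, C i = Set.univ ∧ ∀ i, ∀ x ∈ C i, ∀ y ∈ C i, d x y < r := by
  let U (i : ℕ) : Set E := {y | d (denseSeq E i) y < r / 2}
  have hU_open (i : ℕ) : IsOpen (U i) :=
    isOpen_lt (hd.comp (continuous_const.prodMk continuous_id)) continuous_const
  refine ⟨disjointed U, fun i ↦ .disjointed (fun j ↦ (hU_open j).measurableSet) i,
    disjoint_disjointed U, ?_, fun i x hx y hy ↦ ?_⟩
  · rw [iUnion_disjointed, Set.eq_univ_iff_forall]
    intro x
    have hball_open : IsOpen {y | d y x < r / 2} :=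
      isOpen_lt (hd.comp (continuous_id.prodMk continuous_const)) continuous_const
    obtain ⟨i, hi⟩ := (denseRange_denseSeq E).exists_mem_open hball_open
      ⟨x, by simpa [d.refl] using hr⟩
    exact Set.mem_iUnion.2 ⟨i, hi⟩
  · have hx : d (denseSeq E i) x < r / 2 := disjointed_subset U i hx
    have hy : d (denseSeq E i) y < r / 2 := disjointed_subset U i hy
    linarith [d.triangle x (denseSeq E i) y, d.symm x (denseSeq E i)]

theorem exists_fin_small_cells [Nonempty E] (hd : Continuous fun q : E × E ↦ d q.1 q.2)
    (μ : Measure E) [IsFiniteMeasure μ] {r : ℝ} (hr : 0 < r) {η : ℝ≥0∞} (hη : η ≠ 0) :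
    ∃ (N : ℕ) (A : Fin N → Set E), (∀ i, MeasurableSet (A i)) ∧
      Pairwise (Function.onFun Disjoint A) ∧ (∀ i, ∀ x ∈ A i, ∀ y ∈ A i, d x y < r) ∧
      μ (⋃ i, A i)ᶜ ≤ η := by
  obtain ⟨C, hC, hC_disj, hC_univ, hC_small⟩ := exists_seq_small_cells hd hr
  have htail := tendsto_measure_biUnion_Ici_zero_of_pairwise_disjoint (μ := μ)
    (fun i ↦ (hC i).nullMeasurableSet) hC_disj
  obtain ⟨N, hN⟩ := (htail.eventually_le_const hη.bot_lt).exists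
  refine ⟨N, fun i ↦ C i, fun i ↦ hC i, fun i j hij ↦ hC_disj (Fin.val_injective.ne hij),
    fun i ↦ hC_small i, (measure_mono fun x hx ↦ ?_).trans hN⟩
  obtain ⟨i, hi⟩ := Set.mem_iUnion.1 (hC_univ ▸ Set.mem_univ x)
  exact Set.mem_iUnion₂.2 ⟨i, not_lt.1 fun hiN ↦ hx (Set.mem_iUnion.2 ⟨⟨i, hiN⟩, hi⟩), hi⟩

theorem exists_isCoupling_of_measure_le {μ ν : Measure E} [IsProbabilityMeasure μ]
    [IsProbabilityMeasure ν] (hd : Continuous fun q : E × E ↦ d q.1 q.2) {e s : ℝ} (he : 0 ≤ e)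
    (hes : e < s)
    (h : ∀ A, MeasurableSet A → μ A ≤ ν (openThickening d e A) + ENNReal.ofReal e) :
    ∃ γ, IsCoupling γ μ ν ∧ γ {q | s < d q.1 q.2} ≤ ENNReal.ofReal s := by
  have := nonempty_of_isProbabilityMeasure μ
  have hη : 0 < (s - e) / 3 := by linarith
  obtain ⟨N, A, hA, hA_disj, hA_small, hA_compl⟩ := exists_fin_small_cells hd (μ + ν)
    (half_pos (sub_pos.2 hes)) (ENNReal.ofReal_pos.2 hη).ne'
  obtain ⟨γ, hγ, hbad⟩ := exists_isCoupling_of_small_cells (Real.toNNReal_pos.2 hη) hA hA_disj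
    hA_small ((Measure.le_add_right le_rfl _).trans hA_compl)
    ((Measure.le_add_left le_rfl _).trans hA_compl) h
  refine ⟨γ, hγ, ?_⟩
  calc γ {q | s < d q.1 q.2} = γ {q | e + 2 * ((s - e) / 2) < d q.1 q.2} := by
        rw [mul_div_cancel₀ _ two_ne_zero, add_sub_cancel]
    _ ≤ ENNReal.ofReal e + 3 * ENNReal.ofReal ((s - e) / 3) := hbad
    _ = ENNReal.ofReal s := by
        rw [← ENNReal.ofReal_ofNat 3, ← ENNReal.ofReal_mul zero_le_three,
          ← ENNReal.ofReal_add he (by positivity), mul_div_cancel₀ _ three_ne_zero,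
          add_sub_cancel]

end Approximation

section Compactness

theorem isClosed_setOf_measure_le {X : Type*} [TopologicalSpace X] [MeasurableSpace X]
    [OpensMeasurableSpace X] [HasOuterApproxClosed X] {G : Set X} (hG : IsOpen G) (c : ℝ≥0∞) :
    IsClosed {γ : ProbabilityMeasure X | (γ : Measure X) G ≤ c} :=
  lowerSemicontinuous_iff_isClosed_preimage.1 (lowerSemicontinuous_iff_le_liminf.2 fun _ ↦
    ProbabilityMeasure.le_liminf_measure_open_of_tendsto Filter.tendsto_id hG) c

variable {E F : Type*} [TopologicalSpace E] [PolishSpace E] [MeasurableSpace E] [BorelSpace E]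
  [TopologicalSpace F] [PolishSpace F] [MeasurableSpace F] [BorelSpace F]

theorem isClosed_setOf_isCoupling (μ : Measure E) (ν : Measure F) [IsProbabilityMeasure μ]
    [IsProbabilityMeasure ν] : IsClosed {γ : ProbabilityMeasure (E × F) | IsCoupling γ μ ν} := by
  let P : ProbabilityMeasure E := ⟨μ, inferInstance⟩
  let Q : ProbabilityMeasure F := ⟨ν, inferInstance⟩
  have hP : IsClosed {γ : ProbabilityMeasure (E × F) | γ.map measurable_fst.aemeasurable = P} :=
    isClosed_eq (ProbabilityMeasure.continuous_map continuous_fst) continuous_const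
  have hQ : IsClosed {γ : ProbabilityMeasure (E × F) | γ.map measurable_snd.aemeasurable = Q} :=
    isClosed_eq (ProbabilityMeasure.continuous_map continuous_snd) continuous_const
  convert hP.inter hQ using 1
  ext γ
  exact ⟨fun h ↦ ⟨Subtype.ext h.map_fst, Subtype.ext h.map_snd⟩,
    fun h ↦ ⟨congrArg Subtype.val h.1, congrArg Subtype.val h.2⟩⟩

theorem isCompact_setOf_isCoupling (μ : Measure E) (ν : Measure F) [IsProbabilityMeasure μ]
    [IsProbabilityMeasure ν] : IsCompact {γ : ProbabilityMeasure (E × F) | IsCoupling γ μ ν} := by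
  have htight : IsTightMeasureSet
      {γ | ∃ γ' ∈ {γ : ProbabilityMeasure (E × F) | IsCoupling γ μ ν},
        (γ' : Measure (E × F)) = γ} := by
    refine .prodMk ((isTightMeasureSet_singleton (μ := μ)).subset ?_)
      ((isTightMeasureSet_singleton (μ := ν)).subset ?_)
    · rintro _ ⟨_, ⟨γ, hγ, rfl⟩, rfl⟩
      exact hγ.map_fst
    · rintro _ ⟨_, ⟨γ, hγ, rfl⟩, rfl⟩
      exact hγ.map_snd
  simpa only [(isClosed_setOf_isCoupling μ ν).closure_eq] using
    isCompact_closure_of_isTightMeasureSet htight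

theorem measure_lt_le_of_forall_gt {X : Type*} [MeasurableSpace X] {γ : Measure X} {f : X → ℝ}
    {ε : ℝ} (h : ∀ s, ε < s → γ {x | s < f x} ≤ ENNReal.ofReal s) :
    γ {x | ε < f x} ≤ ENNReal.ofReal ε := by
  obtain ⟨u, u_anti, hu, u_lim⟩ := exists_seq_strictAnti_tendsto ε
  have hunion : {x | ε < f x} = ⋃ k, {x | u k < f x} := by
    ext x
    simp only [Set.mem_iUnion, Set.mem_ofPred_eq]
    exact ⟨fun hx ↦ (u_lim.eventually_lt_const hx).exists, fun ⟨k, hk⟩ ↦ (hu k).trans hk⟩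
  have hmono : Monotone fun k ↦ {x | u k < f x} :=
    fun k l hkl x hx ↦ (u_anti.antitone hkl).trans_lt hx
  rw [hunion]
  exact le_of_tendsto_of_tendsto' (tendsto_measure_iUnion_atTop hmono)
    (ENNReal.tendsto_ofReal u_lim) fun k ↦ h (u k) (hu k)

theorem exists_isCoupling_measure_lt_le {μ : Measure E} {ν : Measure F} [IsProbabilityMeasure μ]
    [IsProbabilityMeasure ν] {f : E × F → ℝ} (hf : Continuous f) {ε : ℝ}
    (h : ∀ s, ε < s → ∃ γ, IsCoupling γ μ ν ∧ γ {q | s < f q} ≤ ENNReal.ofReal s) :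
    ∃ γ, IsCoupling γ μ ν ∧ γ {q | ε < f q} ≤ ENNReal.ofReal ε := by
  let K (s : Set.Ioi ε) : Set (ProbabilityMeasure (E × F)) :=
    {γ | IsCoupling γ μ ν} ∩ {γ | (γ : Measure (E × F)) {q | s < f q} ≤ ENNReal.ofReal s}
  have hK_closed (s : Set.Ioi ε) : IsClosed {γ : ProbabilityMeasure (E × F) |
      (γ : Measure (E × F)) {q | s < f q} ≤ ENNReal.ofReal s} :=
    isClosed_setOf_measure_le (isOpen_lt continuous_const hf) _
  have hK_mono : Monotone K := fun s s' hs γ hγ ↦ ⟨hγ.1, calc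
    (γ : Measure (E × F)) {q | s' < f q} ≤ (γ : Measure (E × F)) {q | s < f q} :=
      measure_mono fun _ hq ↦ (Subtype.coe_le_coe.2 hs).trans_lt hq
    _ ≤ ENNReal.ofReal s := hγ.2
    _ ≤ ENNReal.ofReal s' := ENNReal.ofReal_le_ofReal hs⟩
  obtain ⟨γ, hγ⟩ := IsCompact.nonempty_iInter_of_directed_nonempty_isCompact_isClosed K
    hK_mono.directed_ge
    (fun s ↦ by
      obtain ⟨γ, hγ, hs⟩ := h s s.2
      exact ⟨⟨γ, hγ.isProbabilityMeasure⟩, hγ, hs⟩)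
    (fun s ↦ (isCompact_setOf_isCoupling μ ν).inter_right (hK_closed s))
    (fun s ↦ (isClosed_setOf_isCoupling μ ν).inter (hK_closed s))
  rw [Set.mem_iInter] at hγ
  exact ⟨γ, (hγ ⟨ε + 1, lt_add_one ε⟩).1, measure_lt_le_of_forall_gt fun s hs ↦ (hγ ⟨s, hs⟩).2⟩

end Compactness

theorem stmt10_general {E : Type*} [TopologicalSpace E] [PolishSpace E] [MeasurableSpace E]
    [BorelSpace E] (d : PseudoMetric E ℝ) (hd : Continuous fun q : E × E ↦ d q.1 q.2)
    (μ ν : Measure E) [IsProbabilityMeasure μ] [IsProbabilityMeasure ν] {ε : ℝ} (hε : 0 ≤ ε) :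
    prokhorovDist d μ ν ≤ ε ↔
      ∃ γ : Measure (E × E), IsProbabilityMeasure γ ∧ γ.map Prod.fst = μ ∧ γ.map Prod.snd = ν ∧
        γ {q | ε < d q.1 q.2} ≤ ENNReal.ofReal ε := by
  constructor
  · intro hle
    obtain ⟨γ, hγ, hbad⟩ := exists_isCoupling_measure_lt_le hd fun s hs ↦ by
      obtain ⟨e, hεe, hes⟩ := exists_between hs
      exact exists_isCoupling_of_measure_le hd (hε.trans hεe.le) hes fun A hA ↦
        measure_le_of_prokhorovDist_lt (hle.trans_lt hεe) hA
    exact ⟨γ, hγ.isProbabilityMeasure, hγ.map_fst, hγ.map_snd, hbad⟩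
  · rintro ⟨γ, -, h_fst, h_snd, hbad⟩
    exact IsCoupling.prokhorovDist_le ⟨h_fst, h_snd⟩ d.symm hε hbad

theorem continuous_pnorm {p : ℝ} (hp : 0 ≤ p) {n : ℕ} :
    Continuous (pnorm p : (Fin n → ℝ) → ℝ) :=
  .rpow_const (continuous_finsetSum _ fun i _ ↦
    (continuous_apply i).abs.rpow_const fun _ ↦ .inr hp) fun _ ↦ .inr (one_div_nonneg.2 hp)

/-- The `ℓ_p` distance, as a metric independent of the sup metric carried by `Fin n → ℝ`. -/
noncomputable def pnormDist {p : ℝ} (hp : 1 ≤ p) (n : ℕ) : PseudoMetric (Fin n → ℝ) ℝ where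
  toFun x y := pnorm p (x - y)
  refl' x := by
    have hp_pos : 0 < p := one_pos.trans_le hp
    simp [pnorm, hp_pos.ne']
  symm' x y := by simp only [pnorm, Pi.sub_apply, abs_sub_comm]
  triangle' x y z := by
    simpa [pnorm] using Real.Lp_add_le Finset.univ (x - y) (y - z) hp

/-- Strassen's characterization of the Prokhorov distance: `π_p(D, D') ≤ ε` iff there is
a coupling `γ` of `D` and `D'` with `γ({(x,y) : ‖x - y‖_p > ε}) ≤ ε`. -/
theorem stmt10 (n : ℕ) (hn : 0 < n) (p : ℝ) (hp : 1 ≤ p)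
    (D D' : Measure (Fin n → ℝ)) [IsProbabilityMeasure D] [IsProbabilityMeasure D']
    (ε : ℝ) (hε : 0 ≤ ε) :
    prokhorov p D D' ≤ ε ↔
      ∃ γ : Measure ((Fin n → ℝ) × (Fin n → ℝ)),
        IsProbabilityMeasure γ ∧ γ.map Prod.fst = D ∧ γ.map Prod.snd = D' ∧
          γ {q | ε < pnorm p (q.1 - q.2)} ≤ ENNReal.ofReal ε :=
  stmt10_general (pnormDist hp n)
    ((continuous_pnorm (zero_le_one.trans hp)).comp (continuous_fst.sub continuous_snd)) D D' hε
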